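/- For each n ∈ {30, 31, 32}, the word w contains no ψ-kernel repetition for n; that is, w contains no factor v having a kernel period q with (n−1)(|v|+1) ≥ nq − 3. -/

import Mathlib

/-- The four-letter alphabet `A₄ = {1,2,3,4}`; the value `k : Fin 4` represents letter `k+1`. -/
abbrev A4 := Fin 4

/-- The morphism `f` on letters: `f(1)=121, f(2)=123, f(3)=141, f(4)=142`
(letters `1,2,3,4` encoded as `0,1,2,3`). -/
def fm : A4 → List A4
  | 0 => [0, 1, 0]
  | 1 => [0, 1, 2]
  | 2 => [0, 3, 0]
  | 3 => [0, 3, 1]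

/-- The morphism `f` extended to words by concatenation. -/
def fw (u : List A4) : List A4 := u.flatMap fm

/-- The fixed point `w` of `f` starting with the letter `1`: since `|f^k(1)| = 3^k` and each
`f^k(1)` is a prefix of `f^(k+1)(1)`, the `n`-th letter of `w` is the `n`-th letter of
`f^(n+1)(1)`. -/
def w (n : ℕ) : A4 := ((fw^[n + 1]) [0]).getD n 0

/-- The finite word `t` occurs at position `i` in the infinite word `x`. -/
def OccursAt {α : Type*} (t : List α) (x : ℕ → α) (i : ℕ) : Prop :=
  t = (List.range t.length).map fun k => x (i + k)

/-- The finite word `v` is a factor of the infinite word `x`. -/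
def FactorOf {α : Type*} (v : List α) (x : ℕ → α) : Prop :=
  ∃ i, OccursAt v x i

/-- The finite word `v` has period `q ≥ 1`: `v(j) = v(j+q)` whenever `0 ≤ j < |v| - q`. -/
def HasPeriod {α : Type*} (v : List α) (q : ℕ) : Prop :=
  1 ≤ q ∧ ∀ j, j + q < v.length → v[j]? = v[j + q]?

/-- A word lies in `ker ψ` if each letter of `A₄` occurs in it a number of times
divisible by `4`. -/
def InKerPsi (u : List A4) : Prop := ∀ a : A4, 4 ∣ u.count a

/-- `q` is a kernel period of `v`: `1 ≤ q ≤ |v|`, `v` has period `q`, and the prefix of `v`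
of length `q` lies in `ker ψ`. -/
def KernelPeriod (v : List A4) (q : ℕ) : Prop :=
  q ≤ v.length ∧ HasPeriod v q ∧ InKerPsi (v.take q)


def secL (a : A4) : Nat := match a with | 0 => 1 | 1 => 1 | 2 => 3 | 3 => 3
def thdL (a : A4) : Nat := match a with | 0 => 0 | 1 => 2 | 2 => 0 | 3 => 1

/-- the configurations excluded by the finite check -/
def badT (p a0 a1 a2 pr s0 s1 s2 : A4) (q : Nat) : Bool :=
  (Nat.ble q 36 || (Nat.beq a0.val s0.val && (Nat.ble q 67 ||
      (Nat.beq a1.val s1.val && Nat.ble q 98)))) ||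
  (Nat.beq (thdL p) (thdL pr) &&
    ((Nat.beq (secL a0) (secL s0) && Nat.ble q 46) ||
     (Nat.beq a0.val s0.val && ((Nat.beq (secL a1) (secL s1) && Nat.ble q 77) ||
       (Nat.beq a1.val s1.val && (Nat.beq (secL a2) (secL s2) && Nat.ble q 108))))))

def goT (p a0 a1 a2 : A4) : List A4 → A4 → Nat → Nat → Nat → Nat → Nat → Bool
  | [], _, _, _, _, _, _ => true
  | s0 :: rest, pr, q, c0, c1, c2, c3 =>
    Nat.ble 109 q ||
    (!(Nat.beq (c0 % 4) 0 && (Nat.beq (c1 % 4) 0 && (Nat.beq (c2 % 4) 0 && Nat.beq (c3 % 4) 0)) &&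
        badT p a0 a1 a2 pr s0 (rest.getD 0 0) (rest.getD 1 0) q) &&
      goT p a0 a1 a2 rest s0 (q + 1) (c0 + (if s0 = 0 then 1 else 0)) (c1 + (if s0 = 1 then 1 else 0))
        (c2 + (if s0 = 2 then 1 else 0)) (c3 + (if s0 = 3 then 1 else 0)))

def startT (p : A4) : List A4 → Bool
  | [] => true
  | s0 :: rest => goT p s0 (rest.getD 0 0) (rest.getD 1 0) rest s0 1
      (if s0 = 0 then 1 else 0) (if s0 = 1 then 1 else 0)
      (if s0 = 2 then 1 else 0) (if s0 = 3 then 1 else 0)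

def tailsT : Nat → List A4 → Bool
  | 0, _ => true
  | _ + 1, [] => true
  | n + 1, p :: t => startT p t && tailsT n t


def f5 (a b : A4) : List A4 := fw (fw (fw (fw (fw [a, b]))))

set_option maxRecDepth 100000

theorem chk_start : startT 1 (f5 0 1) = true := by decide +kernel
theorem chk01 : tailsT 243 (f5 0 1) = true := by decide +kernel
theorem chk03 : tailsT 243 (f5 0 3) = true := by decide +kernel
theorem chk10 : tailsT 243 (f5 1 0) = true := by decide +kernel
theorem chk12 : tailsT 243 (f5 1 2) = true := by decide +kernel
theorem chk30 : tailsT 243 (f5 3 0) = true := by decide +kernel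
theorem chk31 : tailsT 243 (f5 3 1) = true := by decide +kernel
theorem chk00 : tailsT 243 (f5 0 0) = true := by decide +kernel
theorem chk20 : tailsT 243 (f5 2 0) = true := by decide +kernel

/-! ### The recursive description of `w` -/

theorem fm_length (a : A4) : (fm a).length = 3 := by revert a; decide

theorem fw_length (u : List A4) : (fw u).length = 3 * u.length := by
  induction u with
  | nil => rfl
  | cons a u ih =>
    have : fw (a :: u) = fm a ++ fw u := rfl
    rw [this, List.length_append, ih, fm_length, List.length_cons]; ring

theorem fw_getD (u : List A4) : ∀ (n r : ℕ), r < 3 → n < u.length →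
    (fw u).getD (3 * n + r) 0 = (fm (u.getD n 0)).getD r 0 := by
  induction u with
  | nil => intro n r _ h; simp at h
  | cons a u ih =>
    intro n r hr hn
    have e : fw (a :: u) = fm a ++ fw u := rfl
    rw [e]
    cases n with
    | zero =>
      rw [List.getD_append _ _ _ _ (by rw [fm_length]; omega)]
      simp
    | succ n =>
      rw [List.getD_append_right _ _ _ _ (by rw [fm_length]; omega), fm_length]
      have := ih n r hr (by simpa using hn)
      rw [show 3 * (n + 1) + r - 3 = 3 * n + r by omega, this]
      simp

theorem W_length (k : ℕ) : ((fw^[k]) [0]).length = 3 ^ k := by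
  induction k with
  | zero => rfl
  | succ k ih => rw [Function.iterate_succ_apply', fw_length, ih]; ring

theorem fw_pre_mono {u v : List A4} (h : u <+: v) : fw u <+: fw v := by
  obtain ⟨t, rfl⟩ := h
  exact ⟨fw t, by simp [fw]⟩

theorem W_pre_succ (k : ℕ) : (fw^[k]) [0] <+: (fw^[k + 1]) [0] := by
  induction k with
  | zero => exact ⟨[1, 0], rfl⟩
  | succ k ih =>
    rw [Function.iterate_succ_apply', Function.iterate_succ_apply' _ (k + 1)]
    exact fw_pre_mono ih

theorem W_getD (n k j : ℕ) (h : n < 3 ^ k) :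
    ((fw^[k + j]) [0]).getD n 0 = ((fw^[k]) [0]).getD n 0 := by
  induction j with
  | zero => rfl
  | succ j ih =>
    rw [← ih]
    obtain ⟨t, ht⟩ := W_pre_succ (k + j)
    rw [← add_assoc, ← ht, List.getD_append]
    rw [W_length]
    exact lt_of_lt_of_le h (Nat.pow_le_pow_right (by norm_num) (by omega))

theorem lt3 (n : ℕ) : n < 3 ^ n := Nat.lt_pow_self (by norm_num)

theorem w_eq (n k : ℕ) (h : n < 3 ^ k) : w n = ((fw^[k]) [0]).getD n 0 := by
  unfold w
  have h1 := W_getD n k (n + 1) h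
  have h2 := W_getD n (n + 1) k (lt_trans (lt3 n) (Nat.pow_lt_pow_right (by norm_num) (by omega)))
  rw [← h2, ← h1, add_comm]

theorem w_rec (n r : ℕ) (hr : r < 3) : w (3 * n + r) = (fm (w n)).getD r 0 := by
  have h1 : n < 3 ^ n := lt3 n
  rw [w_eq (3 * n + r) (n + 1) (by rw [pow_succ]; omega), Function.iterate_succ_apply',
    fw_getD _ _ _ hr (by rw [W_length]; exact h1), ← w_eq n n h1]

def sA (a : A4) : A4 := (fm a).getD 1 0
def tA (a : A4) : A4 := (fm a).getD 2 0

theorem w0 (n : ℕ) : w (3 * n) = 0 := by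
  have := w_rec n 0 (by norm_num)
  rw [Nat.add_zero] at this
  rw [this]
  generalize w n = a
  revert a; decide
theorem w1 (n : ℕ) : w (3 * n + 1) = sA (w n) := w_rec n 1 (by norm_num)
theorem w2 (n : ℕ) : w (3 * n + 2) = tA (w n) := w_rec n 2 (by norm_num)

theorem st_inj : ∀ a b : A4, sA a = sA b → tA a = tA b → a = b := by decide
theorem sA_ne : ∀ a : A4, sA a ≠ 0 := by decide
theorem secL_iff : ∀ a b : A4, sA a = sA b → secL a = secL b := by decide
theorem thdL_iff : ∀ a b : A4, tA a = tA b → thdL a = thdL b := by decide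

theorem pairs (n : ℕ) : (w n = 0 ∧ w (n + 1) = 1) ∨ (w n = 0 ∧ w (n + 1) = 3) ∨
    (w n = 1 ∧ w (n + 1) = 0) ∨ (w n = 1 ∧ w (n + 1) = 2) ∨ (w n = 3 ∧ w (n + 1) = 0) ∨
    (w n = 3 ∧ w (n + 1) = 1) ∨ (w n = 0 ∧ w (n + 1) = 0) ∨ (w n = 2 ∧ w (n + 1) = 0) := by
  obtain ⟨m, h | h | h⟩ : ∃ m, n = 3 * m ∨ n = 3 * m + 1 ∨ n = 3 * m + 2 := ⟨n / 3, by omega⟩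
  · rw [h, w0, w1]; generalize w m = a; revert a; decide
  · rw [h, w1, w2]; generalize w m = a; revert a; decide
  · rw [h, w2, show 3 * m + 2 + 1 = 3 * (m + 1) by ring, w0]; generalize w m = a; revert a; decide

/-- the list `t` matches `w` at position `i` -/
def MatchAt (t : List A4) (i : ℕ) : Prop := ∀ k, k < t.length → t.getD k 0 = w (i + k)

theorem MatchAt.fw {t : List A4} {i : ℕ} (h : MatchAt t i) : MatchAt (fw t) (3 * i) := by
  intro k hk
  rw [fw_length] at hk
  have h1 := fw_getD t (k / 3) (k % 3) (by omega) (by omega)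
  rw [h _ (by omega), ← w_rec _ _ (by omega)] at h1
  rw [show 3 * (k / 3) + k % 3 = k by omega] at h1
  rw [h1]; congr 1; omega

theorem MatchAt.tail {p : A4} {t : List A4} {i : ℕ} (h : MatchAt (p :: t) i) :
    MatchAt t (i + 1) := by
  intro k hk
  have := h (k + 1) (by simpa using hk)
  simp only [List.getD_cons_succ] at this
  rw [this]; congr 1; omega

theorem MatchAt.head {p : A4} {t : List A4} {i : ℕ} (h : MatchAt (p :: t) i) : p = w i := by
  simpa using h 0 (by simp)

theorem match_f5 (n : ℕ) : MatchAt (f5 (w n) (w (n + 1))) (243 * n) := by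
  have h : MatchAt [w n, w (n + 1)] n := by
    intro k hk
    have : k < 2 := by simpa using hk
    interval_cases k <;> simp
  have := h.fw.fw.fw.fw.fw
  rw [show 243 * n = 3 * (3 * (3 * (3 * (3 * n)))) by ring]
  exact this

theorem f5_length (a b : A4) : (f5 a b).length = 486 := by
  simp [f5, fw_length]

theorem chk_all (n : ℕ) : tailsT 243 (f5 (w n) (w (n + 1))) = true := by
  rcases pairs n with ⟨h, h'⟩ | ⟨h, h'⟩ | ⟨h, h'⟩ | ⟨h, h'⟩ | ⟨h, h'⟩ | ⟨h, h'⟩ | ⟨h, h'⟩ | ⟨h, h'⟩ <;>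
    rw [h, h']
  exacts [chk01, chk03, chk10, chk12, chk30, chk31, chk00, chk20]

/-! ### Letter counts -/

def cnt (a : A4) (i : ℕ) : ℕ → ℕ
  | 0 => 0
  | q + 1 => cnt a i q + (if w (i + q) = a then 1 else 0)

theorem cnt_succ' (a : A4) (i q : ℕ) :
    cnt a i (q + 1) = (if w i = a then 1 else 0) + cnt a (i + 1) q := by
  induction q with
  | zero => simp [cnt]
  | succ q ih =>
    rw [cnt, ih, cnt, show i + 1 + q = i + (q + 1) by omega]; omega

theorem cnt_shift (a : A4) (i q : ℕ) (h : w i = w (i + q)) : cnt a (i + 1) q = cnt a i q := by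
  have h1 := cnt_succ' a i q
  rw [cnt, h] at h1
  omega

theorem cnt_block (i q : ℕ) :
    cnt 0 (3 * i) (3 * q) = 2 * cnt 0 i q + cnt 1 i q + 2 * cnt 2 i q + cnt 3 i q ∧
    cnt 1 (3 * i) (3 * q) = cnt 0 i q + cnt 1 i q + cnt 3 i q ∧
    cnt 2 (3 * i) (3 * q) = cnt 1 i q ∧
    cnt 3 (3 * i) (3 * q) = cnt 2 i q + cnt 3 i q := by
  induction q with
  | zero => simp [cnt]
  | succ q ih =>
    obtain ⟨h0, h1, h2, h3⟩ := ih
    have e0 : w (3 * i + 3 * q) = 0 := by rw [← Nat.mul_add, w0]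
    have e1 : w (3 * i + (3 * q + 1)) = sA (w (i + q)) := by rw [← w1]; congr 1; ring
    have e2 : w (3 * i + (3 * q + 1 + 1)) = tA (w (i + q)) := by rw [← w2]; congr 1; ring
    rw [show 3 * (q + 1) = 3 * q + 1 + 1 + 1 by ring]
    simp only [cnt, e0, e1, e2, h0, h1, h2, h3]
    generalize w (i + q) = b
    have : b = 0 ∨ b = 1 ∨ b = 2 ∨ b = 3 := by revert b; decide
    rcases this with rfl | rfl | rfl | rfl <;> simp [sA, tA, fm] <;> omega

/-! ### Soundness of the finite check -/

theorem goT_sound (p a0 a1 a2 : A4) (i : ℕ) : ∀ (t : List A4) (pr : A4) (q c0 c1 c2 c3 : ℕ),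
    MatchAt t (i + q) → 1 ≤ q → pr = w (i + q - 1) → c0 = cnt 0 i q → c1 = cnt 1 i q →
    c2 = cnt 2 i q → c3 = cnt 3 i q → goT p a0 a1 a2 t pr q c0 c1 c2 c3 = true →
    ∀ q', q ≤ q' → q' ≤ 108 → q' + 2 < q + t.length → (∀ a, 4 ∣ cnt a i q') →
    badT p a0 a1 a2 (w (i + q' - 1)) (w (i + q')) (w (i + q' + 1)) (w (i + q' + 2)) q' = false := by
  intro t
  induction t with
  | nil => intro pr q c0 c1 c2 c3 _ _ _ _ _ _ _ _ q' h1 _ h2; simp at h2; omega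
  | cons s0 rest ih =>
    intro pr q c0 c1 c2 c3 hm hq hpr h0 h1 h2 h3 hgo q' hqq hq108 hlen hker
    have hs := hm.head
    rw [goT] at hgo
    have hb : Nat.ble 109 q = false := by
      rw [← Bool.not_eq_true, Nat.ble_eq]; omega
    rw [hb, Bool.false_or, Bool.and_eq_true] at hgo
    obtain ⟨hg1, hg2⟩ := hgo
    rw [List.length_cons] at hlen
    by_cases hc : q' = q
    · subst hc
      have k0 := hker 0
      have k1 := hker 1
      have k2 := hker 2
      have k3 := hker 3
      rw [← h0] at k0
      rw [← h1] at k1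
      rw [← h2] at k2
      rw [← h3] at k3
      have r0 := hm.tail 0 (by omega)
      have r1 := hm.tail 1 (by omega)
      rw [r0, r1, Nat.mod_eq_zero_of_dvd k0, Nat.mod_eq_zero_of_dvd k1,
        Nat.mod_eq_zero_of_dvd k2, Nat.mod_eq_zero_of_dvd k3, hs, hpr] at hg1
      simpa using hg1
    · refine ih s0 (q + 1) _ _ _ _ hm.tail (by omega) ?_ ?_ ?_ ?_ ?_ hg2 q' (by omega) hq108
        (by omega) hker
      · rw [hs]; rfl
      all_goals rw [cnt, ← hs]; omega

theorem startT_sound (p : A4) (t : List A4) (i : ℕ) (hm : MatchAt t i) (hl : 200 ≤ t.length)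
    (h : startT p t = true) (q : ℕ) (hq : 1 ≤ q) (hq' : q ≤ 108) (hk : ∀ a, 4 ∣ cnt a i q) :
    badT p (w i) (w (i + 1)) (w (i + 2)) (w (i + q - 1)) (w (i + q)) (w (i + q + 1))
      (w (i + q + 2)) q = false := by
  cases t with
  | nil => simp at hl
  | cons s0 rest =>
    rw [List.length_cons] at hl
    rw [startT] at h
    have hs := hm.head
    have r0 := hm.tail 0 (by omega)
    have r1 := hm.tail 1 (by omega)
    rw [r0, r1] at h
    have := goT_sound p s0 _ _ i rest s0 1 _ _ _ _ hm.tail le_rfl hs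
      (by simp [cnt, hs]) (by simp [cnt, hs]) (by simp [cnt, hs]) (by simp [cnt, hs]) h q hq hq'
      (by omega) hk
    rw [hs] at this
    exact this

theorem tailsT_sound : ∀ (n : ℕ) (t : List A4) (i r : ℕ), MatchAt t i → n + 201 ≤ t.length → r < n →
    tailsT n t = true → ∃ t', MatchAt t' (i + r + 1) ∧ 200 ≤ t'.length ∧
      startT (w (i + r)) t' = true := by
  intro n
  induction n with
  | zero => intro t i r _ _ h; omega
  | succ n ih =>
    intro t i r hm hl hr h
    cases t with
    | nil => simp at hl
    | cons p t =>
      rw [List.length_cons] at hl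
      rw [tailsT, Bool.and_eq_true] at h
      cases r with
      | zero => exact ⟨t, hm.tail, by omega, by rw [Nat.add_zero, ← hm.head]; exact h.1⟩
      | succ r =>
        have := ih t (i + 1) r hm.tail (by omega) (by omega) h.2
        rwa [show i + 1 + r = i + (r + 1) by omega] at this

theorem base (i : ℕ) : ∃ p, (1 ≤ i → p = w (i - 1)) ∧ ∀ q, 1 ≤ q → q ≤ 108 →
    (∀ a, 4 ∣ cnt a i q) →
    badT p (w i) (w (i + 1)) (w (i + 2)) (w (i + q - 1)) (w (i + q)) (w (i + q + 1))
      (w (i + q + 2)) q = false := by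
  rcases Nat.eq_zero_or_pos i with rfl | hi
  · refine ⟨1, fun h => by omega, fun q h1 h2 h3 => ?_⟩
    have e0 : w 0 = 0 := by decide
    have e1 : w (0 + 1) = 1 := by decide
    have hm := match_f5 0
    rw [e0, e1] at hm
    exact startT_sound 1 _ 0 hm (by rw [f5_length]; norm_num) chk_start q h1 h2 h3
  · refine ⟨w (i - 1), fun _ => rfl, fun q h1 h2 h3 => ?_⟩
    obtain ⟨t, ht, hl, hs⟩ := tailsT_sound 243 _ _ ((i - 1) % 243) (match_f5 ((i - 1) / 243))
      (by rw [f5_length]; norm_num) (Nat.mod_lt _ (by norm_num)) (chk_all _)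
    rw [Nat.div_add_mod] at ht hs
    rw [Nat.sub_add_cancel hi] at ht
    exact startT_sound _ t i ht hl hs q h1 h2 h3

/-- A kernel repetition at position `i` with period `q` and excess `L`. -/
structure KRep (i q L : ℕ) : Prop where
  pos : 1 ≤ q
  ker : ∀ a, 4 ∣ cnt a i q
  per : ∀ k, k < L → w (i + k) = w (i + q + k)

theorem B1 {i q L : ℕ} (h : KRep i q L) (hL : L ≤ 2) (hq : q ≤ 31 * L + 36) : False := by
  obtain ⟨p, -, hp⟩ := base i
  have hb := hp q h.pos (by omega) h.ker
  rw [badT, Bool.or_eq_false_iff] at hb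
  have hb := hb.1
  simp only [← Bool.not_eq_true, Bool.or_eq_true, Bool.and_eq_true, Nat.ble_eq, Nat.beq_eq] at hb
  apply hb
  interval_cases L
  · left; omega
  · right; exact ⟨congrArg Fin.val (h.per 0 (by norm_num)), Or.inl (by omega)⟩
  · right
    exact ⟨congrArg Fin.val (h.per 0 (by norm_num)), Or.inr
      ⟨congrArg Fin.val (h.per 1 (by norm_num)), by omega⟩⟩

theorem B2 {i q L : ℕ} (h : KRep (i + 1) q L) (hL : L ≤ 2) (hq : 2 * q ≤ 62 * L + 93)
    (ht : tA (w i) = tA (w (i + q))) (hs : sA (w (i + 1 + L)) = sA (w (i + 1 + q + L))) :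
    False := by
  obtain ⟨p, hp0, hp⟩ := base (i + 1)
  have hp0 := hp0 (by omega)
  have hb := hp q h.pos (by omega) h.ker
  rw [badT, Bool.or_eq_false_iff] at hb
  have hb := hb.2
  simp only [← Bool.not_eq_true, Bool.or_eq_true, Bool.and_eq_true, Nat.ble_eq, Nat.beq_eq] at hb
  apply hb
  have hs := secL_iff _ _ hs
  refine ⟨?_, ?_⟩
  · rw [hp0, show i + 1 + q - 1 = i + q by omega]; exact thdL_iff _ _ ht
  interval_cases L
  · left; exact ⟨hs, by omega⟩
  · right; exact ⟨congrArg Fin.val (h.per 0 (by norm_num)), Or.inl ⟨hs, by omega⟩⟩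
  · right
    exact ⟨congrArg Fin.val (h.per 0 (by norm_num)), Or.inr
      ⟨congrArg Fin.val (h.per 1 (by norm_num)), hs, by omega⟩⟩

/-! ### Descent -/

theorem sync {i q L : ℕ} (h : KRep i q L) (hL : 3 ≤ L) : 3 ∣ q := by
  by_contra hq
  have hcase : q % 3 = 1 ∨ q % 3 = 2 := by omega
  rcases hcase with hq | hq
  · obtain ⟨k, hk, m, hm⟩ : ∃ k < 3, ∃ m, i + k = 3 * m :=
      ⟨(3 - i % 3) % 3, by omega, (i + (3 - i % 3) % 3) / 3, by omega⟩
    have := h.per k (by omega)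
    rw [show i + q + k = 3 * (m + q / 3) + 1 by omega, hm, w0, w1] at this
    exact sA_ne _ this.symm
  · obtain ⟨k, hk, m, hm⟩ : ∃ k < 3, ∃ m, i + k = 3 * m + 1 :=
      ⟨(4 - i % 3) % 3, by omega, (i + (4 - i % 3) % 3) / 3, by omega⟩
    have := h.per k (by omega)
    rw [show i + q + k = 3 * (m + q / 3 + 1) by omega, hm, w0, w1] at this
    exact sA_ne _ this

theorem aligned {m q K : ℕ} (h : KRep (3 * m) (3 * q) K) : KRep m q (K / 3) := by
  refine ⟨by have := h.pos; omega, ?_, ?_⟩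
  · obtain ⟨h0, h1, h2, h3⟩ := cnt_block m q
    have k0 := h.ker 0
    have k1 := h.ker 1
    have k2 := h.ker 2
    have k3 := h.ker 3
    rw [h0] at k0
    rw [h1] at k1
    rw [h2] at k2
    rw [h3] at k3
    intro a
    have : a = 0 ∨ a = 1 ∨ a = 2 ∨ a = 3 := by revert a; decide
    rcases this with rfl | rfl | rfl | rfl <;> omega
  · intro k hk
    have e1 := h.per (3 * k + 1) (by omega)
    have e2 := h.per (3 * k + 2) (by omega)
    rw [show 3 * m + (3 * k + 1) = 3 * (m + k) + 1 by ring,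
      show 3 * m + 3 * q + (3 * k + 1) = 3 * (m + q + k) + 1 by ring, w1, w1] at e1
    rw [show 3 * m + (3 * k + 2) = 3 * (m + k) + 2 by ring,
      show 3 * m + 3 * q + (3 * k + 2) = 3 * (m + q + k) + 2 by ring, w2, w2] at e2
    exact st_inj _ _ e1 e2

theorem descent {i q L : ℕ} (h : KRep i q L) (hL : 3 ≤ L) : ∃ i' q' L', q = 3 * q' ∧ L' < L ∧
    KRep i' q' L' ∧ (L ≤ 3 * L' + 2 ∨ (L = 3 * L' + 3 ∧ ∃ j, i' = j + 1 ∧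
      tA (w j) = tA (w (j + q')) ∧ sA (w (j + 1 + L')) = sA (w (j + 1 + q' + L')))) := by
  obtain ⟨q', rfl⟩ := sync h hL
  obtain ⟨m, rfl | rfl | rfl⟩ : ∃ m, i = 3 * m ∨ i = 3 * m + 1 ∨ i = 3 * m + 2 :=
    ⟨i / 3, by omega⟩
  · exact ⟨m, q', L / 3, rfl, by omega, aligned h, Or.inl (by omega)⟩
  · have e : w (3 * m) = w (3 * m + 3 * q') := by rw [← Nat.mul_add, w0, w0]
    have h' : KRep (3 * m) (3 * q') (L + 1) := by
      refine ⟨h.pos, fun a => ?_, fun k hk => ?_⟩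
      · rw [← cnt_shift a _ _ e]; exact h.ker a
      · cases k with
        | zero => exact e
        | succ k =>
          have := h.per k (by omega)
          rwa [show 3 * m + 1 + k = 3 * m + (k + 1) by ring,
            show 3 * m + 1 + 3 * q' + k = 3 * m + 3 * q' + (k + 1) by ring] at this
    exact ⟨m, q', (L + 1) / 3, rfl, by omega, aligned h', Or.inl (by omega)⟩
  · have e : w (3 * m + 2) = w (3 * m + 2 + 3 * q') := h.per 0 (by omega)
    have h' : KRep (3 * (m + 1)) (3 * q') (L - 1) := by
      refine ⟨h.pos, fun a => ?_, fun k hk => ?_⟩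
      · rw [show 3 * (m + 1) = 3 * m + 2 + 1 by ring, cnt_shift a _ _ e]; exact h.ker a
      · have := h.per (k + 1) (by omega)
        rwa [show 3 * m + 2 + (k + 1) = 3 * (m + 1) + k by ring,
          show 3 * m + 2 + 3 * q' + (k + 1) = 3 * (m + 1) + 3 * q' + k by ring] at this
    refine ⟨m + 1, q', (L - 1) / 3, rfl, by omega, aligned h', ?_⟩
    by_cases hc : L ≤ 3 * ((L - 1) / 3) + 2
    · exact Or.inl hc
    · refine Or.inr ⟨by omega, m, rfl, ?_, ?_⟩
      · rw [show 3 * m + 2 + 3 * q' = 3 * (m + q') + 2 by ring, w2, w2] at e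
        exact e
      · have := h'.per (3 * ((L - 1) / 3) + 1) (by omega)
        rw [show 3 * (m + 1) + (3 * ((L - 1) / 3) + 1) = 3 * (m + 1 + (L - 1) / 3) + 1 by ring,
          show 3 * (m + 1) + 3 * q' + (3 * ((L - 1) / 3) + 1)
            = 3 * (m + 1 + q' + (L - 1) / 3) + 1 by ring, w1, w1] at this
        exact this

theorem main_bound : ∀ (L i q : ℕ), 3 ≤ L → KRep i q L → 62 * L + 93 < 2 * q := by
  intro L
  induction L using Nat.strong_induction_on with
  | _ L ih =>
    intro i q hL h
    by_contra hcon
    obtain ⟨i', q', L', rfl, hlt, h', hcase⟩ := descent h hL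
    by_cases hL' : 3 ≤ L'
    · have := ih L' hlt i' q' hL' h'
      omega
    · rcases hcase with hc | ⟨hc, j, rfl, ht, hs⟩
      · exact B1 h' (by omega) (by omega)
      · exact B2 h' (by omega) (by omega) ht hs

theorem count_eq (a : A4) (i q : ℕ) :
    ((List.range q).map fun k => w (i + k)).count a = cnt a i q := by
  induction q with
  | zero => rfl
  | succ q ih =>
    rw [List.range_succ, List.map_append, List.count_append, ih, cnt]
    simp [List.count_singleton]

/-- For `n ∈ {30, 31, 32}`, `w` contains no ψ-kernel repetition for `n`: no factor `v` of `w`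
has a kernel period `q` with `(n-1)(|v|+1) ≥ nq - 3`. -/
theorem stmt2 (n : ℕ) (hn : n = 30 ∨ n = 31 ∨ n = 32) :
    ¬ ∃ (v : List A4) (q : ℕ), FactorOf v w ∧ KernelPeriod v q ∧
      ((n : ℤ) - 1) * (v.length + 1) ≥ (n : ℤ) * q - 3 := by
  rintro ⟨v, q, ⟨i, hv⟩, ⟨hql, ⟨hq1, hper⟩, hker⟩, hineq⟩
  unfold OccursAt at hv
  obtain ⟨L, hL⟩ : ∃ L, v.length = q + L := ⟨v.length - q, by omega⟩
  have hget : ∀ j, j < v.length → v[j]? = some (w (i + j)) := by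
    intro j hj
    rw [hv]
    simp [hj]
  have hrep : KRep i q L := by
    refine ⟨hq1, fun a => ?_, fun k hk => ?_⟩
    · have := hker a
      rw [hv, ← List.map_take, List.take_range, min_eq_left hql, count_eq] at this
      exact this
    · have := hper k (by omega)
      rw [hget _ (by omega), hget _ (by omega), Option.some_inj] at this
      rw [this]; congr 1; omega
  have hb : q ≤ 31 * L + 34 := by
    rw [hL] at hineq
    rcases hn with rfl | rfl | rfl <;> push_cast at hineq <;> omega
  by_cases h3 : 3 ≤ L
  · have := main_bound L i q h3 hrep
    omega
  · exact B1 hrep (by omega) (by omega)
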